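/- arXiv:2309.00721 — 2 statements merged into one kernel-verified Lean document; each statement's English description precedes it below -/
import Mathlib

section
/- Let M be a 3×3 real symmetric matrix and m₀ ∈ ℝ. Let q ∈ ℝ⁴ with ‖q‖ = 1 and q̇ ∈ ℝ⁴ with qᵀq̇ = 0, and set ω = 2Jᵀ(q)q̇. Define Ḋ = J(q̇)MJᵀ(q) + J(q)MJᵀ(q̇) + m₀(q̇qᵀ + qq̇ᵀ) and C(q,q̇) = −J(q)(Mω)^∧Jᵀ(q) − D(q)Q(q̇)Qᵀ(q). Then the matrix Ḋ − 2C(q,q̇) is annihilated by every quadratic form: xᵀ(Ḋ − 2C(q,q̇))x = 0 for all x ∈ ℝ⁴. -/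
/-!
Write `S = Q(q̇)Qᵀ(q)`. Since `Q(q)ᵀQ(q) = ‖q‖²I` and `S + Sᵀ = 2(qᵀq̇)I`, one has
`Jᵀ(q)S = 2(qᵀq̇)Jᵀ(q) - ‖q‖²Jᵀ(q̇)` and `qᵀS = 2(qᵀq̇)qᵀ - ‖q‖²q̇ᵀ`
(`Jmat_transpose_mul_Qmat`, `vecMul_Qmat`). Under the hypotheses this gives
`D(q)S = -(J(q)MJᵀ(q̇) + m₀qq̇ᵀ)`, so that
`Ḋ - 2C = (J(q̇)MJᵀ(q) - J(q)MJᵀ(q̇)) + m₀(q̇qᵀ - qq̇ᵀ) + 2J(q)(Mω)^∧Jᵀ(q)`.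
As `M` is symmetric and hat matrices are skew, this is a skew-symmetric matrix, and its quadratic
form vanishes.
-/

open Matrix

noncomputable section

/-- Cross-product (hat) matrix of a 3-vector: `vecHat v *ᵥ u = v ×₃ u`. -/
def vecHat (v : Fin 3 → ℝ) : Matrix (Fin 3) (Fin 3) ℝ :=
  !![0, -v 2, v 1; v 2, 0, -v 0; -v 1, v 0, 0]

/-- The 4×3 matrix J(x): first row −x⃗ᵀ, lower 3×3 block x₀I₃ + x⃗^∧. -/
def Jmat (x : Fin 4 → ℝ) : Matrix (Fin 4) (Fin 3) ℝ :=
  Matrix.of fun i j =>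
    if h : i = 0 then -x j.succ
    else (x 0 • (1 : Matrix (Fin 3) (Fin 3) ℝ) + vecHat fun k => x k.succ) (i.pred h) j

/-- The 4×3 matrix L(x): first row −x⃗ᵀ, lower 3×3 block x₀I₃ − x⃗^∧. -/
def Lmat (x : Fin 4 → ℝ) : Matrix (Fin 4) (Fin 3) ℝ :=
  Matrix.of fun i j =>
    if h : i = 0 then -x j.succ
    else (x 0 • (1 : Matrix (Fin 3) (Fin 3) ℝ) - vecHat fun k => x k.succ) (i.pred h) j

/-- The 4×4 matrix Q(x) = [x J(x)] (first column x, remaining columns J(x)). -/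
def Qmat (x : Fin 4 → ℝ) : Matrix (Fin 4) (Fin 4) ℝ :=
  Matrix.of fun i j => if h : j = 0 then x i else Jmat x i (j.pred h)

/-- The 4×4 matrix W(x) = [x L(x)] (first column x, remaining columns L(x)). -/
def Wmat (x : Fin 4 → ℝ) : Matrix (Fin 4) (Fin 4) ℝ :=
  Matrix.of fun i j => if h : j = 0 then x i else Lmat x i (j.pred h)

/-- Euclidean norm on ℝ⁴: ‖x‖ = (xᵀx)^{1/2}. -/
def norm4 (x : Fin 4 → ℝ) : ℝ := Real.sqrt (x ⬝ᵥ x)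

/-- The identity quaternion 1̄ = (1,0,0,0) ∈ ℝ⁴. -/
def one4 : Fin 4 → ℝ := ![1, 0, 0, 0]

/-- Inertia-type matrix D(q) = J(q) M Jᵀ(q) + m₀ q qᵀ. -/
def Dmat (M : Matrix (Fin 3) (Fin 3) ℝ) (m₀ : ℝ) (q : Fin 4 → ℝ) :
    Matrix (Fin 4) (Fin 4) ℝ :=
  Jmat q * M * (Jmat q)ᵀ + m₀ • vecMulVec q q

/-- Coriolis-type matrix C(q,q̇) = −J(q)(Mω)^∧Jᵀ(q) − D(q)Q(q̇)Qᵀ(q), ω = 2Jᵀ(q)q̇. -/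
def Cmat (M : Matrix (Fin 3) (Fin 3) ℝ) (m₀ : ℝ) (q qd : Fin 4 → ℝ) :
    Matrix (Fin 4) (Fin 4) ℝ :=
  -(Jmat q * vecHat (M *ᵥ ((2 : ℝ) • ((Jmat q)ᵀ *ᵥ qd))) * (Jmat q)ᵀ)
    - Dmat M m₀ q * Qmat qd * (Qmat q)ᵀ

theorem Jmat_eq (x : Fin 4 → ℝ) :
    Jmat x = !![-x 1, -x 2, -x 3; x 0, -x 3, x 2; x 3, x 0, -x 1; -x 2, x 1, x 0] := by
  ext i j
  fin_cases i <;> fin_cases j <;> simp [Jmat, vecHat, Fin.pred, Fin.subNat, Matrix.one_apply]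

theorem Qmat_eq (x : Fin 4 → ℝ) :
    Qmat x = !![x 0, -x 1, -x 2, -x 3; x 1, x 0, -x 3, x 2; x 2, x 3, x 0, -x 1;
      x 3, -x 2, x 1, x 0] := by
  ext i j
  fin_cases i <;> fin_cases j <;> simp [Qmat, Jmat_eq, Fin.pred, Fin.subNat]

theorem vecHat_transpose (v : Fin 3 → ℝ) : (vecHat v)ᵀ = -vecHat v := by
  ext i j
  fin_cases i <;> fin_cases j <;> simp [vecHat]

theorem Jmat_transpose_mul_Qmat (q p : Fin 4 → ℝ) :
    (Jmat q)ᵀ * (Qmat p * (Qmat q)ᵀ)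
      = (2 * (q ⬝ᵥ p)) • (Jmat q)ᵀ - (q ⬝ᵥ q) • (Jmat p)ᵀ := by
  rw [Jmat_eq, Jmat_eq, Qmat_eq, Qmat_eq]
  ext i j
  fin_cases i <;> fin_cases j <;>
    simp [Matrix.vecMul, Matrix.mul_apply, dotProduct, Fin.sum_univ_four] <;> ring

theorem vecMul_Qmat (q p : Fin 4 → ℝ) :
    q ᵥ* (Qmat p * (Qmat q)ᵀ) = (2 * (q ⬝ᵥ p)) • q - (q ⬝ᵥ q) • p := by
  rw [Qmat_eq, Qmat_eq]
  ext i
  fin_cases i <;>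
    simp [Matrix.vecMul, Matrix.mul_apply, dotProduct, Fin.sum_univ_four] <;> ring

theorem quadForm_eq_zero_of_skew {n : Type*} [Fintype n] {A : Matrix n n ℝ} (hA : Aᵀ = -A)
    (x : n → ℝ) : x ⬝ᵥ (A *ᵥ x) = 0 := by
  have h : x ⬝ᵥ (A *ᵥ x) = -(x ⬝ᵥ (A *ᵥ x)) := by
    conv_lhs => rw [dotProduct_mulVec, ← mulVec_transpose, hA, neg_mulVec, neg_dotProduct,
      dotProduct_comm]
  linarith

/-- Skew-symmetry property: xᵀ(Ḋ − 2C(q,q̇))x = 0 for all x ∈ ℝ⁴, where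
Ḋ = J(q̇)MJᵀ(q) + J(q)MJᵀ(q̇) + m₀(q̇qᵀ + qq̇ᵀ). -/
theorem stmt12 (M : Matrix (Fin 3) (Fin 3) ℝ) (hM : Mᵀ = M) (m₀ : ℝ)
    (q qd : Fin 4 → ℝ) (hq : norm4 q = 1) (hqd : q ⬝ᵥ qd = 0) :
    ∀ x : Fin 4 → ℝ,
      x ⬝ᵥ (((Jmat qd * M * (Jmat q)ᵀ + Jmat q * M * (Jmat qd)ᵀ
          + m₀ • (vecMulVec qd q + vecMulVec q qd))
        - (2 : ℝ) • Cmat M m₀ q qd) *ᵥ x) = 0 := by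
  intro x
  have hqq : q ⬝ᵥ q = 1 := by rwa [norm4, Real.sqrt_eq_one] at hq
  have hJ : (Jmat q)ᵀ * (Qmat qd * (Qmat q)ᵀ) = -(Jmat qd)ᵀ := by
    simp [Jmat_transpose_mul_Qmat, hqd, hqq]
  have hv : q ᵥ* (Qmat qd * (Qmat q)ᵀ) = -qd := by
    simp [vecMul_Qmat, hqd, hqq]
  have hD : Dmat M m₀ q * Qmat qd * (Qmat q)ᵀ
      = -(Jmat q * M * (Jmat qd)ᵀ + m₀ • vecMulVec q qd) := by
    rw [Matrix.mul_assoc, Dmat, Matrix.add_mul, Matrix.mul_assoc (Jmat q * M), hJ,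
      Matrix.smul_mul, vecMulVec_mul, hv, Matrix.mul_neg, vecMulVec_neg, smul_neg, neg_add]
  apply quadForm_eq_zero_of_skew
  rw [Cmat, hD]
  simp only [transpose_add, transpose_sub, transpose_neg, transpose_smul, transpose_mul,
    transpose_transpose, transpose_vecMulVec, vecHat_transpose, hM, Matrix.mul_neg,
    Matrix.neg_mul, Matrix.mul_assoc]
  module
end
end

section
/- For every g = (q, p) with q ∈ ℝ⁴, ‖q‖ = 1, and qᵀp = 0, define g⁻¹ = (q⁻¹, p⁻¹), where q⁻¹ = (q₀, −q⃗) and p⁻¹ = (p₀, −p⃗). Then g · g⁻¹ = g⁻¹ · g = (1̄, 0), where · is the binary operation on TS³ defined below. -/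
/-!
In quaternion terms `Qmat x *ᵥ y = x y` and `Wmat y *ᵥ x = x y`, and `qconj` is conjugation
`x ↦ x̄`. For a unit quaternion `q q̄ = q̄ q = 1̄`, which settles the first component. In the second
component of `g · g⁻¹` the part free of `λ` is `q p̄ + p q̄ = 2 ⟨q, p⟩ 1̄ = 0`, and the
coefficient of `λ` is
`q (q₀ q̄ - 1̄) + (q₀ q - 1̄) q̄ - (1̄ - 1̄) = 2 q₀ 1̄ - (q + q̄) = 0`.
Since `qconj` is an involution preserving the inner product and the first coordinate, `g⁻¹ · g`
is the same identity applied to `g⁻¹`.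
-/

open Matrix

noncomputable section

/-- The binary operation on TS³ from Eq. (12) of the paper (with parameter λ). -/
def gmul (lam : ℝ) (g₁ g₂ : (Fin 4 → ℝ) × (Fin 4 → ℝ)) : (Fin 4 → ℝ) × (Fin 4 → ℝ) :=
  (Qmat g₁.1 *ᵥ g₂.1,
    Qmat g₁.1 *ᵥ g₂.2 + Wmat g₂.1 *ᵥ g₁.2
      + lam • (Qmat g₁.1 *ᵥ (g₂.1 0 • g₂.1 - one4))
      + lam • (Wmat g₂.1 *ᵥ (g₁.1 0 • g₁.1 - one4))
      - lam • ((Qmat g₁.1 *ᵥ g₂.1) 0 • (Qmat g₁.1 *ᵥ g₂.1) - one4))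

/-- Quaternion-style conjugation on ℝ⁴: (x₀, x⃗) ↦ (x₀, −x⃗). -/
def qconj (x : Fin 4 → ℝ) : Fin 4 → ℝ := fun i => if i = 0 then x i else -x i

/-- `Qmat x *ᵥ y` is the Hamilton product `x y`, in coordinates. -/
lemma Qmat_mulVec (x y : Fin 4 → ℝ) :
    Qmat x *ᵥ y =
      ![x 0 * y 0 - x 1 * y 1 - x 2 * y 2 - x 3 * y 3,
        x 0 * y 1 + x 1 * y 0 + x 2 * y 3 - x 3 * y 2,
        x 0 * y 2 - x 1 * y 3 + x 2 * y 0 + x 3 * y 1,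
        x 0 * y 3 + x 1 * y 2 - x 2 * y 1 + x 3 * y 0] := by
  ext i
  fin_cases i <;>
    simp [Matrix.mulVec, dotProduct, Fin.sum_univ_succ, Qmat, Jmat, vecHat, Fin.pred, Fin.subNat,
      Matrix.one_apply] <;> ring

lemma Wmat_mulVec (x y : Fin 4 → ℝ) : Wmat y *ᵥ x = Qmat x *ᵥ y := by
  rw [Qmat_mulVec]
  ext i
  fin_cases i <;>
    simp [Matrix.mulVec, dotProduct, Fin.sum_univ_succ, Wmat, Lmat, vecHat, Fin.pred, Fin.subNat,
      Matrix.one_apply] <;> ring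

lemma qconj_qconj (x : Fin 4 → ℝ) : qconj (qconj x) = x := by
  ext i
  by_cases h : i = 0 <;> simp [qconj, h]

lemma qconj_dotProduct_qconj (x y : Fin 4 → ℝ) : qconj x ⬝ᵥ qconj y = x ⬝ᵥ y := by
  simp [dotProduct, Fin.sum_univ_four, qconj]

lemma Qmat_mulVec_one4 (x : Fin 4 → ℝ) : Qmat x *ᵥ one4 = x := by
  rw [Qmat_mulVec]
  ext i
  fin_cases i <;> simp [one4]

lemma Qmat_one4_mulVec (x : Fin 4 → ℝ) : Qmat one4 *ᵥ x = x := by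
  rw [Qmat_mulVec]
  ext i
  fin_cases i <;> simp [one4]

lemma add_qconj (x : Fin 4 → ℝ) : x + qconj x = (2 * x 0) • one4 := by
  ext i
  fin_cases i <;> simp [one4, qconj]
  ring

/-- Polarization of the norm identity: `x ȳ + y x̄ = 2 ⟨x, y⟩ 1̄`. -/
lemma Qmat_mulVec_qconj_add (x y : Fin 4 → ℝ) :
    Qmat x *ᵥ qconj y + Qmat y *ᵥ qconj x = (2 * (x ⬝ᵥ y)) • one4 := by
  rw [Qmat_mulVec, Qmat_mulVec]
  ext i
  fin_cases i <;> simp [one4, qconj, dotProduct, Fin.sum_univ_four] <;> ring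

lemma Qmat_mulVec_qconj_self (x : Fin 4 → ℝ) : Qmat x *ᵥ qconj x = (x ⬝ᵥ x) • one4 := by
  have h := Qmat_mulVec_qconj_add x x
  rw [← two_smul ℝ, mul_smul] at h
  exact smul_right_injective _ (two_ne_zero' ℝ) h

lemma gmul_qconj (lam : ℝ) (q p : Fin 4 → ℝ) (hq : q ⬝ᵥ q = 1) (hp : q ⬝ᵥ p = 0) :
    gmul lam (q, p) (qconj q, qconj p) = (one4, 0) := by
  have hmul : Qmat q *ᵥ qconj q = one4 := by rw [Qmat_mulVec_qconj_self, hq, one_smul]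
  have hone : one4 0 = 1 := by simp [one4]
  have hconj : qconj q 0 = q 0 := by simp [qconj]
  -- the part of the second component that does not involve `lam`
  have htan : Qmat q *ᵥ qconj p + Wmat (qconj q) *ᵥ p = 0 := by
    rw [Wmat_mulVec, Qmat_mulVec_qconj_add, hp, mul_zero, zero_smul]
  have hleft : Qmat q *ᵥ (q 0 • qconj q - one4) = q 0 • one4 - q := by
    rw [Matrix.mulVec_sub, Matrix.mulVec_smul, hmul, Qmat_mulVec_one4]
  have hright : Wmat (qconj q) *ᵥ (q 0 • q - one4) = q 0 • one4 - qconj q := by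
    rw [Matrix.mulVec_sub, Matrix.mulVec_smul, Wmat_mulVec, Wmat_mulVec, hmul, Qmat_one4_mulVec]
  have hsum : q 0 • one4 - q + (q 0 • one4 - qconj q) = 0 := by
    rw [sub_add_sub_comm, add_qconj, ← add_smul, ← two_mul, sub_self]
  simp only [gmul, hmul, hone, hconj, htan, hleft, hright, one_smul, sub_self, smul_zero,
    zero_add, ← smul_add, hsum]

/-- g⁻¹ = ((q₀, −q⃗), (p₀, −p⃗)) is a two-sided inverse of g = (q, p) ∈ TS³. -/
theorem stmt14 (lam : ℝ) (hlam : 0 < lam) (q p : Fin 4 → ℝ)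
    (hq : norm4 q = 1) (hp : q ⬝ᵥ p = 0) :
    gmul lam (q, p) (qconj q, qconj p) = (one4, 0) ∧
    gmul lam (qconj q, qconj p) (q, p) = (one4, 0) := by
  have hqq : q ⬝ᵥ q = 1 := Real.sqrt_eq_one.mp hq
  refine ⟨gmul_qconj lam q p hqq hp, ?_⟩
  have h := gmul_qconj lam (qconj q) (qconj p)
    (by rw [qconj_dotProduct_qconj, hqq]) (by rw [qconj_dotProduct_qconj, hp])
  rwa [qconj_qconj, qconj_qconj] at h
end
end
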